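/- arXiv:1406.7442 — 6 statements merged into one kernel-verified Lean document; each statement's English description precedes it below -/
import Mathlib

section
/- Let F and G be symmetric n×n real matrices such that for every nonzero vector v ∈ ℝⁿ with vᵀGv = 0 one has vᵀFv > 0. Then there exists a real number r such that F − rG is positive definite. -/
/-!
Write `f v = vᵀFv`, `g v = vᵀGv`, restricted to the compact unit sphere `K`. If no `r` works, `ℝ` is
the union of `A = {r | ∃ v ∈ K, 0 ≤ g v ∧ f v ≤ r g v}` and
`B = {r | ∃ v ∈ K, g v ≤ 0 ∧ f v ≤ r g v}`. Both are closed, as projections along a compact space,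
and neither is all of `ℝ` (`exists_forall_nonneg_lt`), so by connectedness of `ℝ` they share some `r`.
This produces `u, w` with `g w < 0 < g u` on which the form `f - r g` is nonpositive. On the line
`u + t w` the form `g` vanishes for one positive and one negative `t`; with the sign of `t` chosen so
that the cross term of `f - r g` is nonpositive, `f = f - r g ≤ 0` at that zero of `g`, against the
hypothesis (`not_separated`).
-/

open Matrix

/-- A real quadratic whose constant and leading coefficients have opposite signs has a positive
root. -/
lemma exists_pos_root {a b c : ℝ} (ha : 0 < a) (hc : c < 0) :
    ∃ t : ℝ, 0 < t ∧ a + b * t + c * t ^ 2 = 0 := by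
  have hd : 0 ≤ b ^ 2 - 4 * a * c := by nlinarith [sq_nonneg b, mul_pos ha (neg_pos.2 hc)]
  have hs := Real.sq_sqrt hd
  have hlt : -b < √(b ^ 2 - 4 * a * c) := by
    refine lt_of_le_of_lt (neg_le_abs b) (Real.lt_sqrt_of_sq_lt ?_)
    rw [sq_abs]
    nlinarith [mul_pos ha (neg_pos.2 hc)]
  refine ⟨(-b - √(b ^ 2 - 4 * a * c)) / (2 * c), div_pos_of_neg_of_neg (by linarith) (by linarith),
    ?_⟩
  have hc' : c ≠ 0 := hc.ne
  generalize √(b ^ 2 - 4 * a * c) = s at hs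
  field_simp
  linear_combination hs

lemma quad_line {n : ℕ} (M : Matrix (Fin n) (Fin n) ℝ) (u w : Fin n → ℝ) (t : ℝ) :
    (u + t • w) ⬝ᵥ M.mulVec (u + t • w) =
      u ⬝ᵥ M.mulVec u + (u ⬝ᵥ M.mulVec w + w ⬝ᵥ M.mulVec u) * t + w ⬝ᵥ M.mulVec w * t ^ 2 := by
  simp only [mulVec_add, mulVec_smul, dotProduct_add, add_dotProduct, dotProduct_smul,
    smul_dotProduct, smul_eq_mul]
  ring

lemma quad_smul {n : ℕ} (M : Matrix (Fin n) (Fin n) ℝ) (w : Fin n → ℝ) (t : ℝ) :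
    (t • w) ⬝ᵥ M.mulVec (t • w) = t ^ 2 * (w ⬝ᵥ M.mulVec w) := by
  simp only [mulVec_smul, dotProduct_smul, smul_dotProduct, smul_eq_mul]
  ring

/-- Under the hypothesis of Finsler's lemma, the form `F - r G` cannot be nonpositive both at a point
where `G` is positive and at a point where `G` is negative. -/
lemma not_separated {n : ℕ} (F G : Matrix (Fin n) (Fin n) ℝ)
    (h : ∀ v : Fin n → ℝ, v ≠ 0 → v ⬝ᵥ G.mulVec v = 0 → 0 < v ⬝ᵥ F.mulVec v)
    {r : ℝ} {u w : Fin n → ℝ} (hu : 0 < u ⬝ᵥ G.mulVec u) (hw : w ⬝ᵥ G.mulVec w < 0)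
    (hfu : u ⬝ᵥ F.mulVec u ≤ r * (u ⬝ᵥ G.mulVec u))
    (hfw : w ⬝ᵥ F.mulVec w ≤ r * (w ⬝ᵥ G.mulVec w)) : False := by
  -- Replacing `w` by `-w` flips the sign of the cross term.
  wlog hc : (u ⬝ᵥ F.mulVec w + w ⬝ᵥ F.mulVec u) - r * (u ⬝ᵥ G.mulVec w + w ⬝ᵥ G.mulVec u) ≤ 0
    generalizing w
  · refine this (w := -w) ?_ ?_ ?_ <;>
      simp only [mulVec_neg, dotProduct_neg, neg_dotProduct, neg_neg] <;> linarith
  obtain ⟨t, ht, hroot⟩ := exists_pos_root (b := u ⬝ᵥ G.mulVec w + w ⬝ᵥ G.mulVec u) hu hw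
  have hne : u + t • w ≠ 0 := by
    intro h0
    rw [show u = (-t) • w by rw [neg_smul]; exact eq_neg_of_add_eq_zero_left h0, quad_smul] at hu
    nlinarith [sq_nonneg (-t)]
  have hpos := h _ hne ((quad_line G u w t).trans hroot)
  rw [quad_line] at hpos
  have h1 := mul_nonpos_of_nonpos_of_nonneg hc ht.le
  have h2 := mul_nonpos_of_nonpos_of_nonneg (sub_nonpos.2 hfw) (sq_nonneg t)
  have h3 := congrArg (r * ·) hroot
  simp only [mul_zero] at h3
  linarith

/-- A sufficiently negative slope `r` handles the part of a compact space where `g` is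
nonnegative. -/
lemma exists_forall_nonneg_lt {K : Type*} [TopologicalSpace K] [CompactSpace K] {f g : K → ℝ}
    (hf : Continuous f) (hg : Continuous g) (h : ∀ v, g v = 0 → 0 < f v) :
    ∃ r : ℝ, ∀ v, 0 ≤ g v → r * g v < f v := by
  by_contra! hcon
  -- The compact sets of points violating the conclusion for `r = -m` decrease with `m`.
  obtain ⟨v, hv⟩ := IsCompact.nonempty_iInter_of_sequence_nonempty_isCompact_isClosed
    (fun m : ℕ => {v : K | 0 ≤ g v ∧ f v ≤ -(m : ℝ) * g v})
    (fun m v hv => ⟨hv.1, hv.2.trans (by push_cast; linarith [hv.1])⟩)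
    (fun m => hcon _)
    ((isClosed_le continuous_const hg).inter (isClosed_le hf (continuous_const.mul hg))).isCompact
    (fun m => (isClosed_le continuous_const hg).inter
      (isClosed_le hf (continuous_const.mul hg)))
  simp only [Set.mem_iInter, Set.mem_ofPred_eq] at hv
  rcases (hv 0).1.eq_or_lt with h0 | h0
  · have h1 := (hv 0).2
    have h2 := h v h0.symm
    rw [← h0, mul_zero] at h1
    linarith
  · obtain ⟨m, hm⟩ := exists_nat_gt (-f v / g v)
    rw [div_lt_iff₀ h0] at hm
    linarith [(hv m).2]

lemma isClosed_bad {K : Type*} [TopologicalSpace K] [CompactSpace K] {f g : K → ℝ}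
    (hf : Continuous f) (hg : Continuous g) :
    IsClosed {r : ℝ | ∃ v, 0 ≤ g v ∧ f v ≤ r * g v} := by
  have hcl : IsClosed {p : K × ℝ | 0 ≤ g p.1 ∧ f p.1 ≤ p.2 * g p.1} :=
    (isClosed_le continuous_const (hg.comp continuous_fst)).inter
      (isClosed_le (hf.comp continuous_fst) (continuous_snd.mul (hg.comp continuous_fst)))
  convert isClosedMap_snd_of_compactSpace _ hcl using 1
  ext r
  simp

/-- Topological form of the lemma: if no `r` fails both at a point where `g` is positive and at a point
where `g` is negative, then some `r` fails nowhere. The sets of `r` failing on either side are closed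
and proper, so by connectedness of `ℝ` they cannot cover `ℝ` without meeting. -/
lemma exists_slope {K : Type*} [TopologicalSpace K] [CompactSpace K] {f g : K → ℝ}
    (hf : Continuous f) (hg : Continuous g) (h : ∀ v, g v = 0 → 0 < f v)
    (hsep : ∀ r u w, 0 < g u → g w < 0 → f u ≤ r * g u → f w ≤ r * g w → False) :
    ∃ r : ℝ, ∀ v, r * g v < f v := by
  by_contra! hcon
  have hA := isClosed_bad hf hg
  have hB : IsClosed {r : ℝ | ∃ v, g v ≤ 0 ∧ f v ≤ r * g v} := by
    have := (isClosed_bad hf hg.neg).preimage (continuous_neg (G := ℝ))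
    simpa using this
  obtain ⟨r₁, h₁⟩ := exists_forall_nonneg_lt hf hg h
  obtain ⟨r₂, h₂⟩ := exists_forall_nonneg_lt hf hg.neg (fun v hv => h v (by simpa using hv))
  have hcov (r : ℝ) : (∃ v, 0 ≤ g v ∧ f v ≤ r * g v) ∨ (∃ v, g v ≤ 0 ∧ f v ≤ r * g v) := by
    obtain ⟨v, hv⟩ := hcon r
    rcases le_total 0 (g v) with hv' | hv'
    exacts [.inl ⟨v, hv', hv⟩, .inr ⟨v, hv', hv⟩]
  obtain ⟨r, -, ⟨u, hu, hfu⟩, ⟨w, hw, hfw⟩⟩ := isPreconnected_closed_iff.1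
    (isPreconnected_univ (α := ℝ)) _ _ hA hB (fun r _ => hcov r)
    ⟨-r₂, trivial, (hcov _).resolve_right fun ⟨v, hv, hfv⟩ => by
      have := h₂ v (by simpa using hv)
      simp only [Pi.neg_apply] at this
      linarith⟩
    ⟨r₁, trivial, (hcov _).resolve_left fun ⟨v, hv, hfv⟩ => (h₁ v hv).not_ge hfv⟩
  have hu' : g u ≠ 0 := fun h0 => by
    have := h u h0
    simp only [h0, mul_zero] at hfu
    linarith
  have hw' : g w ≠ 0 := fun h0 => by
    have := h w h0
    simp only [h0, mul_zero] at hfw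
    linarith
  exact hsep r u w (hu.lt_of_ne' hu') (hw.lt_of_ne hw') hfu hfw

/-- **Finsler's Lemma.** If `F, G` are symmetric real `n × n` matrices such that
`vᵀ F v > 0` for every nonzero `v` with `vᵀ G v = 0`, then there is `r : ℝ` with
`F - r • G` positive definite. -/
theorem finsler_lemma {n : ℕ} (F G : Matrix (Fin n) (Fin n) ℝ)
    (hF : F.IsSymm) (hG : G.IsSymm)
    (h : ∀ v : Fin n → ℝ, v ≠ 0 → v ⬝ᵥ G.mulVec v = 0 → 0 < v ⬝ᵥ F.mulVec v) :
    ∃ r : ℝ, ∀ v : Fin n → ℝ, v ≠ 0 → 0 < v ⬝ᵥ (F - r • G).mulVec v := by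
  -- The sphere of the sup norm; any compact set meeting every ray would do.
  obtain ⟨r, hr⟩ := exists_slope (K := Metric.sphere (0 : Fin n → ℝ) 1)
    (f := fun v => v.1 ⬝ᵥ F.mulVec v.1) (g := fun v => v.1 ⬝ᵥ G.mulVec v.1)
    (by fun_prop) (by fun_prop)
    (fun v => h v.1 (ne_zero_of_mem_unit_sphere v))
    (fun r u w hu hw hfu hfw => not_separated F G h hu hw hfu hfw)
  refine ⟨r, fun v hv => ?_⟩
  have hn : 0 < ‖v‖ := norm_pos_iff.2 hv
  have := hr ⟨‖v‖⁻¹ • v, by simp [norm_smul, hn.ne']⟩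
  simp only [quad_smul] at this
  have hpos : 0 < ‖v‖⁻¹ ^ 2 * (v ⬝ᵥ (F - r • G).mulVec v) := by
    simp only [sub_mulVec, smul_mulVec, dotProduct_sub, dotProduct_smul, smul_eq_mul]
    linarith
  exact pos_of_mul_pos_right hpos (by positivity)
end

section
/- Let F and G be symmetric n×n real matrices such that for every nonzero vector v ∈ ℝⁿ with vᵀGv ≥ 0 one has vᵀFv > 0. Then there exists a real number r > 0 such that F − rG is positive definite. -/
/-!
Write `f v = vᵀFv` and `g v = vᵀGv`. The number `r` must lie strictly between the quotients `f w / g w`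
with `g w < 0` and the quotients `f u / g u` with `g u > 0`. The two families are separated: the
form `g` vanishes at two points `u + t w` with `t` of opposite signs, `f` is positive there, and a
positive combination of the two inequalities gives `f w / g w < f u / g u`
(`quadForm_mul_lt`).

By compactness of `{f ≤ 0}` on the unit sphere, where `g < 0`, the largest relevant lower quotient
`R ≥ 0` is attained; it satisfies `f - R g ≥ 0` everywhere and `f - R g > 0` on `{g ≥ 0} \ {0}`
(`exists_nonneg_weak`). By compactness of `{g ≥ 0}` on the sphere, `g ≤ C (f - R g)` there, so `R`
can be increased slightly, which makes the inequality strict on `{g < 0}` as well.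
-/

open Matrix

lemma quadForm_smul {n : ℕ} (A : Matrix (Fin n) (Fin n) ℝ) (c : ℝ) (v : Fin n → ℝ) :
    (c • v) ⬝ᵥ A.mulVec (c • v) = c ^ 2 * (v ⬝ᵥ A.mulVec v) := by
  simp only [mulVec_smul, smul_dotProduct, dotProduct_smul, smul_eq_mul]
  ring

lemma quadForm_add_smul {n : ℕ} (A : Matrix (Fin n) (Fin n) ℝ) (u w : Fin n → ℝ) (t : ℝ) :
    (u + t • w) ⬝ᵥ A.mulVec (u + t • w) = u ⬝ᵥ A.mulVec u
      + (u ⬝ᵥ A.mulVec w + w ⬝ᵥ A.mulVec u) * t + (w ⬝ᵥ A.mulVec w) * t ^ 2 := by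
  simp only [mulVec_add, mulVec_smul, smul_dotProduct, dotProduct_smul, smul_eq_mul,
    add_dotProduct, dotProduct_add]
  ring

lemma continuous_quadForm {n : ℕ} (A : Matrix (Fin n) (Fin n) ℝ) :
    Continuous fun v : Fin n → ℝ => v ⬝ᵥ A.mulVec v := by
  fun_prop

lemma exists_sphere_smul {n : ℕ} {v : Fin n → ℝ} (hv : v ≠ 0) :
    ∃ c : ℝ, 0 < c ∧ ∃ x ∈ Metric.sphere (0 : Fin n → ℝ) 1, v = c • x := by
  have hc : 0 < ‖v‖ := norm_pos_iff.mpr hv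
  refine ⟨‖v‖, hc, ‖v‖⁻¹ • v, ?_, ?_⟩
  · rw [mem_sphere_zero_iff_norm, norm_smul, norm_inv, norm_norm, inv_mul_cancel₀ hc.ne']
  · rw [smul_smul, mul_inv_cancel₀ hc.ne', one_smul]

/-- The two roots `t` of `α + β t + γ t²` have opposite signs and product `α / γ`; weighting the
inequalities at the roots so that the linear terms cancel compares `a` with `c * (α / γ)`. -/
lemma mul_lt_of_pos_at_roots {α β γ a b c : ℝ} (hα : 0 < α) (hγ : γ < 0)
    (h : ∀ t, α + β * t + γ * t ^ 2 = 0 → 0 < a + b * t + c * t ^ 2) : a * γ < c * α := by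
  have hαγ : 0 < -(α * γ) := by nlinarith
  have hD : 0 ≤ β ^ 2 - 4 * α * γ := by nlinarith [sq_nonneg β]
  obtain ⟨s, hs0, hs⟩ : ∃ s : ℝ, 0 ≤ s ∧ s ^ 2 = β ^ 2 - 4 * α * γ :=
    ⟨_, Real.sqrt_nonneg _, Real.sq_sqrt hD⟩
  have hsβ : |β| < s := abs_lt_of_sq_lt_sq (by nlinarith) hs0
  obtain ⟨h1, h2⟩ := abs_lt.mp hsβ
  have key : ∀ x : ℝ, x ^ 2 + 2 * β * x + 4 * α * γ = 0 →
      0 < 4 * γ ^ 2 * a + 2 * γ * b * x + c * x ^ 2 := by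
    intro x hx
    have hr : α + β * (x / (2 * γ)) + γ * (x / (2 * γ)) ^ 2 = 0 := by
      have hg := hγ.ne
      field_simp
      linarith
    have h3 := mul_pos (h _ hr) (show 0 < 4 * γ ^ 2 by nlinarith)
    have h4 : (a + b * (x / (2 * γ)) + c * (x / (2 * γ)) ^ 2) * (4 * γ ^ 2)
        = 4 * γ ^ 2 * a + 2 * γ * b * x + c * x ^ 2 := by
      have hg := hγ.ne
      field_simp
      ring
    linarith
  have k1 := mul_pos (key (-β + s) (by linarith)) (show 0 < s + β by linarith)
  have k2 := mul_pos (key (-β - s) (by linarith)) (show 0 < s - β by linarith)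
  -- The weighted sum equals `8 s γ (a γ - c α)`.
  have k3 : 0 < (8 * s * -γ) * (c * α - a * γ) := by
    have e : (8 * s * -γ) * (c * α - a * γ)
      = (4 * γ ^ 2 * a + 2 * γ * b * (-β + s) + c * (-β + s) ^ 2) * (s + β)
        + (4 * γ ^ 2 * a + 2 * γ * b * (-β - s) + c * (-β - s) ^ 2) * (s - β) := by
      linear_combination (-2 * s * c) * hs
    linarith
  have hpos : 0 ≤ 8 * s * -γ := by nlinarith
  linarith [pos_of_mul_pos_right k3 hpos]

/-- The inequality `f w / g w < f u / g u` for `g w < 0 < g u`, with denominators cleared. -/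
lemma quadForm_mul_lt {n : ℕ} {F G : Matrix (Fin n) (Fin n) ℝ}
    (h : ∀ v : Fin n → ℝ, v ≠ 0 → 0 ≤ v ⬝ᵥ G.mulVec v → 0 < v ⬝ᵥ F.mulVec v)
    {u w : Fin n → ℝ} (hu : 0 < u ⬝ᵥ G.mulVec u) (hw : w ⬝ᵥ G.mulVec w < 0) :
    (u ⬝ᵥ F.mulVec u) * (w ⬝ᵥ G.mulVec w) < (w ⬝ᵥ F.mulVec w) * (u ⬝ᵥ G.mulVec u) := by
  refine mul_lt_of_pos_at_roots (β := u ⬝ᵥ G.mulVec w + w ⬝ᵥ G.mulVec u)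
    (b := u ⬝ᵥ F.mulVec w + w ⬝ᵥ F.mulVec u) hu hw fun t ht => ?_
  rw [← quadForm_add_smul] at ht ⊢
  refine h _ (fun h0 => ?_) ht.ge
  -- `u` cannot be a multiple of `w`, since `g` has opposite signs at the two vectors.
  have hu' : u = (-t) • w := by rw [neg_smul]; exact eq_neg_of_add_eq_zero_left h0
  rw [hu', quadForm_smul] at hu
  nlinarith [sq_nonneg (-t)]

lemma exists_nonneg_weak {n : ℕ} {F G : Matrix (Fin n) (Fin n) ℝ}
    (h : ∀ v : Fin n → ℝ, v ≠ 0 → 0 ≤ v ⬝ᵥ G.mulVec v → 0 < v ⬝ᵥ F.mulVec v) :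
    ∃ R : ℝ, 0 ≤ R ∧ ∀ v : Fin n → ℝ, v ≠ 0 →
      0 ≤ v ⬝ᵥ F.mulVec v - R * (v ⬝ᵥ G.mulVec v) ∧
      (0 ≤ v ⬝ᵥ G.mulVec v → 0 < v ⬝ᵥ F.mulVec v - R * (v ⬝ᵥ G.mulVec v)) := by
  set K : Set (Fin n → ℝ) := Metric.sphere 0 1 ∩ {v | v ⬝ᵥ F.mulVec v ≤ 0} with hK
  have hKc : IsCompact K :=
    (isCompact_sphere _ _).inter_right (isClosed_le (continuous_quadForm F) continuous_const)
  have hKG : ∀ x ∈ K, x ⬝ᵥ G.mulVec x < 0 := by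
    intro x hx
    by_contra! hg
    exact (h x (ne_zero_of_mem_unit_sphere (⟨x, hx.1⟩ : Metric.sphere (0 : Fin n → ℝ) 1)) hg).not_ge
      hx.2
  rcases K.eq_empty_or_nonempty with hE | hne
  · refine ⟨0, le_rfl, fun v hv => ?_⟩
    have hpos : 0 < v ⬝ᵥ F.mulVec v := by
      obtain ⟨c, hc, x, hx, rfl⟩ := exists_sphere_smul hv
      by_contra! hf
      rw [quadForm_smul] at hf
      have : x ∈ K := ⟨hx, nonpos_of_mul_nonpos_right hf (by positivity)⟩
      simp [hE] at this
    simp [hpos, hpos.le]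
  · obtain ⟨w, hwK, hmax⟩ := hKc.exists_isMaxOn (f := fun v => (v ⬝ᵥ F.mulVec v) / (v ⬝ᵥ G.mulVec v))
      hne ((continuous_quadForm F).continuousOn.div (continuous_quadForm G).continuousOn
        fun x hx => (hKG x hx).ne)
    have hwG := hKG w hwK
    have hR : 0 ≤ (w ⬝ᵥ F.mulVec w) / (w ⬝ᵥ G.mulVec w) := div_nonneg_of_nonpos hwK.2 hwG.le
    refine ⟨_, hR, fun v hv => ?_⟩
    have hstrict : 0 ≤ v ⬝ᵥ G.mulVec v → 0 < v ⬝ᵥ F.mulVec v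
        - (w ⬝ᵥ F.mulVec w) / (w ⬝ᵥ G.mulVec w) * (v ⬝ᵥ G.mulVec v) := by
      intro hg
      rcases hg.eq_or_lt with hg0 | hg0
      · rw [← hg0, mul_zero, sub_zero]
        exact h v hv hg
      · have := quadForm_mul_lt h hg0 hwG
        rw [sub_pos, div_mul_eq_mul_div, div_lt_iff_of_neg hwG]
        exact this
    refine ⟨?_, hstrict⟩
    rcases le_or_gt 0 (v ⬝ᵥ G.mulVec v) with hg | hg
    · exact (hstrict hg).le
    rcases le_or_gt (v ⬝ᵥ F.mulVec v) 0 with hf | hf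
    · obtain ⟨c, hc, x, hx, rfl⟩ := exists_sphere_smul hv
      have hc2 : 0 < c ^ 2 := by positivity
      rw [quadForm_smul] at hf ⊢
      rw [quadForm_smul]
      have hxK : x ∈ K := ⟨hx, nonpos_of_mul_nonpos_right hf hc2⟩
      have hle : (x ⬝ᵥ F.mulVec x) / (x ⬝ᵥ G.mulVec x)
          ≤ (w ⬝ᵥ F.mulVec w) / (w ⬝ᵥ G.mulVec w) := hmax hxK
      rw [div_le_iff_of_neg (hKG x hxK)] at hle
      nlinarith [mul_le_mul_of_nonneg_left hle hc2.le]
    · nlinarith [mul_nonneg hR (neg_pos.mpr hg).le]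

/-- Variant of Finsler's Lemma: if `vᵀ F v > 0` for every nonzero `v` with
`vᵀ G v ≥ 0`, then there is `r > 0` with `F - r • G` positive definite. -/
theorem finsler_lemma_ge {n : ℕ} (F G : Matrix (Fin n) (Fin n) ℝ)
    (hF : F.IsSymm) (hG : G.IsSymm)
    (h : ∀ v : Fin n → ℝ, v ≠ 0 → 0 ≤ v ⬝ᵥ G.mulVec v → 0 < v ⬝ᵥ F.mulVec v) :
    ∃ r : ℝ, 0 < r ∧ ∀ v : Fin n → ℝ, v ≠ 0 → 0 < v ⬝ᵥ (F - r • G).mulVec v := by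
  have expand : ∀ (r : ℝ) (v : Fin n → ℝ),
      v ⬝ᵥ (F - r • G).mulVec v = v ⬝ᵥ F.mulVec v - r * (v ⬝ᵥ G.mulVec v) := by
    intro r v
    rw [sub_mulVec, smul_mulVec, dotProduct_sub, dotProduct_smul, smul_eq_mul]
  obtain ⟨R, hR, hw⟩ := exists_nonneg_weak h
  have hKc : IsCompact (Metric.sphere (0 : Fin n → ℝ) 1 ∩ {v | 0 ≤ v ⬝ᵥ G.mulVec v}) :=
    (isCompact_sphere _ _).inter_right (isClosed_le continuous_const (continuous_quadForm G))
  have hpos : ∀ x ∈ Metric.sphere (0 : Fin n → ℝ) 1 ∩ {v | 0 ≤ v ⬝ᵥ G.mulVec v},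
      0 < x ⬝ᵥ (F - R • G).mulVec x := fun x hx => by
    rw [expand]
    exact (hw x (ne_zero_of_mem_unit_sphere
      (⟨x, hx.1⟩ : Metric.sphere (0 : Fin n → ℝ) 1))).2 hx.2
  obtain ⟨C, hC⟩ := hKc.exists_bound_of_continuousOn
    ((continuous_quadForm G).continuousOn.div (continuous_quadForm (F - R • G)).continuousOn
      fun x hx => (hpos x hx).ne')
  -- A bound strictly above every quotient, positive even when the compact set is empty.
  have hD : 0 < |C| + 1 := by positivity
  refine ⟨R + (|C| + 1)⁻¹, by positivity, fun v hv => ?_⟩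
  rw [expand]
  have hδ : 0 < (|C| + 1)⁻¹ := inv_pos.mpr hD
  rcases lt_or_ge (v ⬝ᵥ G.mulVec v) 0 with hg | hg
  · nlinarith [(hw v hv).1, mul_pos hδ (neg_pos.mpr hg)]
  · obtain ⟨c, hc, x, hx, rfl⟩ := exists_sphere_smul hv
    have hc2 : 0 < c ^ 2 := by positivity
    rw [quadForm_smul] at hg
    have hxK : x ∈ Metric.sphere (0 : Fin n → ℝ) 1 ∩ {v | 0 ≤ v ⬝ᵥ G.mulVec v} :=
      ⟨hx, nonneg_of_mul_nonneg_right hg hc2⟩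
    have hlt : (x ⬝ᵥ G.mulVec x) / (x ⬝ᵥ (F - R • G).mulVec x) < |C| + 1 :=
      lt_of_le_of_lt ((le_abs_self _).trans ((hC x hxK).trans (le_abs_self C))) (lt_add_one _)
    rw [div_lt_iff₀ (hpos x hxK), ← inv_mul_lt_iff₀ hD, expand] at hlt
    rw [quadForm_smul, quadForm_smul]
    nlinarith [mul_lt_mul_of_pos_left hlt hc2]
end

section
/- Let N be a weak quadratic module in Symₙ(ℝ[x]) and let T be a preordering in ℝ[x]. Then for every F ∈ Symₙ(ℝ[x]) the following are equivalent: (1) there exists t ∈ T such that tF ∈ Iₙ + T·N; (2) there exists s ∈ Σℝ[x]² such that (1+s)F ∈ Iₙ + T·N. -/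
/-!
The converse direction holds because `1 + s ∈ T`. For the other one, let `t F = I + W` with
`W ∈ T·N`. A symmetric `F` admits a sum of squares `e` such that `e I + F` is a sum of hermitian
squares (`exists_scalar_add_mem_SOSmat`), hence an element of `N`. For `σ, ρ ∈ T` and
`τ = 1 + σ e + ρ` one has
`τ W + σ (e I + F) + ρ I = (τ t + σ) F - I`,
and the left-hand side lies in `T·N`. It remains to choose `σ` and `ρ` so that `τ t + σ` is
`1` plus a sum of squares. With `k = (1 + e) / 2`, the choice
`σ = (1 - k t)²` and `ρ = t (2 k e + k² e (1 + t + t²))` gives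
`τ t + σ = 1 + (t k)² (1 + e (1 + t)²)`.
-/

open Matrix MvPolynomial

noncomputable section

/-- Finite sums of squares of polynomials in `ℝ[x₁,…,x_d]`. -/
def SOSpoly (d : ℕ) : Set (MvPolynomial (Fin d) ℝ) :=
  {p | p ∈ AddSubmonoid.closure {q : MvPolynomial (Fin d) ℝ | ∃ r, q = r ^ 2}}

/-- Finite sums of hermitian squares `Hᵀ * H` of `n × n` matrix polynomials. -/
def SOSmat (d n : ℕ) : Set (Matrix (Fin n) (Fin n) (MvPolynomial (Fin d) ℝ)) :=
  {M | M ∈ AddSubmonoid.closure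
      {A : Matrix (Fin n) (Fin n) (MvPolynomial (Fin d) ℝ) | ∃ H, A = Hᵀ * H}}

/-- A weak quadratic module in `Symₙ(ℝ[x])`. -/
def IsWeakQM {d n : ℕ} (N : Set (Matrix (Fin n) (Fin n) (MvPolynomial (Fin d) ℝ))) : Prop :=
  (∀ A ∈ N, ∀ B ∈ N, A + B ∈ N) ∧
  (∀ s ∈ SOSpoly d, ∀ A ∈ N, s • A ∈ N) ∧
  SOSmat d n ⊆ N

/-- The smallest weak quadratic module containing `𝒢`. -/
def NmodSet {d n : ℕ} (𝒢 : Set (Matrix (Fin n) (Fin n) (MvPolynomial (Fin d) ℝ))) :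
    Set (Matrix (Fin n) (Fin n) (MvPolynomial (Fin d) ℝ)) :=
  ⋂₀ {N | IsWeakQM N ∧ 𝒢 ⊆ N}

/-- `K_𝒢`: points `a` admitting a nonzero positive semidefinite symmetric real
matrix `B` with `tr(G(a)B) ≥ 0` for all `G ∈ 𝒢`. -/
def KsetTr {d n : ℕ} (𝒢 : Set (Matrix (Fin n) (Fin n) (MvPolynomial (Fin d) ℝ))) :
    Set (Fin d → ℝ) :=
  {a | ∃ B : Matrix (Fin n) (Fin n) ℝ, B ≠ 0 ∧ B.IsSymm ∧
    (∀ v : Fin n → ℝ, 0 ≤ v ⬝ᵥ B.mulVec v) ∧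
    ∀ G ∈ 𝒢, 0 ≤ ((G.map (eval a)) * B).trace}

/-- A preordering in `ℝ[x]`: contains all sums of squares and is closed under
addition and multiplication. -/
def IsPreordering {d : ℕ} (T : Set (MvPolynomial (Fin d) ℝ)) : Prop :=
  SOSpoly d ⊆ T ∧ (∀ a ∈ T, ∀ b ∈ T, a + b ∈ T) ∧ (∀ a ∈ T, ∀ b ∈ T, a * b ∈ T)

/-- The set of finite sums `∑ aᵢ • Bᵢ` with `aᵢ ∈ A`, `Bᵢ ∈ B`. -/
def setSMul {d n : ℕ} (A : Set (MvPolynomial (Fin d) ℝ))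
    (B : Set (Matrix (Fin n) (Fin n) (MvPolynomial (Fin d) ℝ))) :
    Set (Matrix (Fin n) (Fin n) (MvPolynomial (Fin d) ℝ)) :=
  {M | M ∈ AddSubmonoid.closure
      {P : Matrix (Fin n) (Fin n) (MvPolynomial (Fin d) ℝ) |
        ∃ a ∈ A, ∃ b ∈ B, P = a • b}}

/-- The sets of sums of squares used here agree with Mathlib's predicate `IsSumSq`. -/
lemma mem_SOSpoly_iff {d : ℕ} {p : MvPolynomial (Fin d) ℝ} : p ∈ SOSpoly d ↔ IsSumSq p := by
  have h : {q : MvPolynomial (Fin d) ℝ | ∃ r, q = r ^ 2} = {q | IsSquare q} := by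
    ext q
    simp [isSquare_iff_exists_sq]
  rw [SOSpoly, Set.mem_ofPred_eq, h, AddSubmonoid.closure_isSquare, AddSubmonoid.mem_sumSq]

lemma add_mem_SOSmat {d n : ℕ} {A B : Matrix (Fin n) (Fin n) (MvPolynomial (Fin d) ℝ)}
    (hA : A ∈ SOSmat d n) (hB : B ∈ SOSmat d n) : A + B ∈ SOSmat d n :=
  AddSubmonoid.add_mem (AddSubmonoid.closure _) hA hB

lemma zero_mem_SOSmat (d n : ℕ) : (0 : Matrix (Fin n) (Fin n) (MvPolynomial (Fin d) ℝ)) ∈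
    SOSmat d n :=
  AddSubmonoid.zero_mem (AddSubmonoid.closure _)

lemma transpose_mul_mem_SOSmat {d n : ℕ} (H : Matrix (Fin n) (Fin n) (MvPolynomial (Fin d) ℝ)) :
    Hᵀ * H ∈ SOSmat d n :=
  AddSubmonoid.subset_closure
    (s := {A : Matrix (Fin n) (Fin n) (MvPolynomial (Fin d) ℝ) | ∃ H, A = Hᵀ * H}) ⟨H, rfl⟩

lemma add_mem_setSMul {d n : ℕ} {T : Set (MvPolynomial (Fin d) ℝ)}
    {N : Set (Matrix (Fin n) (Fin n) (MvPolynomial (Fin d) ℝ))}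
    {A B : Matrix (Fin n) (Fin n) (MvPolynomial (Fin d) ℝ)}
    (hA : A ∈ setSMul T N) (hB : B ∈ setSMul T N) : A + B ∈ setSMul T N :=
  AddSubmonoid.add_mem (AddSubmonoid.closure _) hA hB

lemma mem_setSMul_of_mem {d n : ℕ} {T : Set (MvPolynomial (Fin d) ℝ)}
    {N : Set (Matrix (Fin n) (Fin n) (MvPolynomial (Fin d) ℝ))}
    {a : MvPolynomial (Fin d) ℝ} (ha : a ∈ T)
    {B : Matrix (Fin n) (Fin n) (MvPolynomial (Fin d) ℝ)} (hB : B ∈ N) : a • B ∈ setSMul T N :=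
  AddSubmonoid.subset_closure
    (s := {P : Matrix (Fin n) (Fin n) (MvPolynomial (Fin d) ℝ) |
      ∃ a ∈ T, ∃ b ∈ N, P = a • b}) ⟨a, ha, B, hB, rfl⟩

/-- Every symmetric `F` is bounded below by a scalar matrix: `F + c I` is a sum of hermitian
squares for some sum of squares `c`. Bounds add up, so it suffices to treat `B + Bᵀ` with
`B = a Eᵢⱼ`, where `(1 + a²) I + B + Bᵀ = (I + B)ᵀ(I + B) + (a (I - Eⱼⱼ))ᵀ(a (I - Eⱼⱼ))`. -/
lemma exists_scalar_add_mem_SOSmat {d n : ℕ}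
    (F : Matrix (Fin n) (Fin n) (MvPolynomial (Fin d) ℝ)) (hF : F.IsSymm) :
    ∃ c : MvPolynomial (Fin d) ℝ, IsSumSq c ∧ c • 1 + F ∈ SOSmat d n := by
  have hsum : F = ∑ i, ∑ j, (single i j (C (1 / 2) * F i j)
      + (single i j (C (1 / 2) * F i j))ᵀ) := by
    have key : F = (C (1 / 2) : MvPolynomial (Fin d) ℝ) • F
        + ((C (1 / 2) : MvPolynomial (Fin d) ℝ) • F)ᵀ := by
      have h2 : (C (1 / 2) + C (1 / 2) : MvPolynomial (Fin d) ℝ) = 1 := by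
        rw [← C_add]
        norm_num
      rw [transpose_smul, hF.eq, ← add_smul, h2, one_smul]
    have h3 := matrix_eq_sum_single ((C (1 / 2) : MvPolynomial (Fin d) ℝ) • F)
    simp only [Finset.sum_add_distrib, ← transpose_sum]
    simp only [Matrix.smul_apply, smul_eq_mul] at h3
    rw [← h3]
    exact key
  rw [hsum]
  let P : Matrix (Fin n) (Fin n) (MvPolynomial (Fin d) ℝ) → Prop :=
    fun M ↦ ∃ c : MvPolynomial (Fin d) ℝ, IsSumSq c ∧ c • 1 + M ∈ SOSmat d n
  have hadd : ∀ A B, P A → P B → P (A + B) := by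
    rintro A B ⟨a, ha, hA⟩ ⟨b, hb, hB⟩
    refine ⟨a + b, ha.add hb, ?_⟩
    have h := add_mem_SOSmat hA hB
    rw [add_add_add_comm, ← add_smul] at h
    exact h
  have hzero : P 0 := ⟨0, IsSumSq.zero, by
    rw [zero_smul, add_zero]
    exact zero_mem_SOSmat d n⟩
  change P _
  refine Finset.sum_induction _ P hadd hzero fun i _ ↦
    Finset.sum_induction _ P hadd hzero fun j _ ↦ ?_
  generalize C (1 / 2) * F i j = a
  refine ⟨1 + a * a, IsSumSq.one.add (IsSumSq.mul_self a), ?_⟩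
  have hEq : (1 + a * a) • (1 : Matrix (Fin n) (Fin n) (MvPolynomial (Fin d) ℝ))
        + (single i j a + (single i j a)ᵀ)
      = (1 + single i j a)ᵀ * (1 + single i j a)
        + (a • (1 - single j j 1))ᵀ * (a • (1 - single j j 1)) := by
    have h1 : (single j j (a * a) : Matrix (Fin n) (Fin n) (MvPolynomial (Fin d) ℝ))
        = (a * a) • single j j 1 := by
      rw [smul_single, smul_eq_mul, mul_one]
    simp only [transpose_add, transpose_sub, transpose_smul, transpose_one, transpose_single,
      smul_mul_smul_comm, add_mul, mul_add, sub_mul, mul_sub, one_mul, mul_one,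
      single_mul_single_same, h1]
    module
  rw [hEq]
  exact add_mem_SOSmat (transpose_mul_mem_SOSmat _) (transpose_mul_mem_SOSmat _)

lemma smul_mem_setSMul {d n : ℕ} {T : Set (MvPolynomial (Fin d) ℝ)}
    {N : Set (Matrix (Fin n) (Fin n) (MvPolynomial (Fin d) ℝ))} (hT : IsPreordering T)
    {a : MvPolynomial (Fin d) ℝ} (ha : a ∈ T)
    {W : Matrix (Fin n) (Fin n) (MvPolynomial (Fin d) ℝ)} (hW : W ∈ setSMul T N) :
    a • W ∈ setSMul T N := by
  change W ∈ AddSubmonoid.closure _ at hW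
  induction hW using AddSubmonoid.closure_induction with
  | mem x hx =>
    obtain ⟨b, hb, B, hB, rfl⟩ := hx
    rw [smul_smul]
    exact mem_setSMul_of_mem (hT.2.2 a ha b hb) hB
  | zero =>
    rw [smul_zero]
    exact AddSubmonoid.zero_mem (AddSubmonoid.closure _)
  | add x y _ _ hx hy =>
    rw [smul_add]
    exact add_mem_setSMul hx hy

/-- The trick of replacing a multiplier `t ∈ T` by `1 + s` with `s` a sum of
squares. -/
theorem multiplier_trick {d n : ℕ}
    (N : Set (Matrix (Fin n) (Fin n) (MvPolynomial (Fin d) ℝ))) (hN : IsWeakQM N)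
    (T : Set (MvPolynomial (Fin d) ℝ)) (hT : IsPreordering T)
    (F : Matrix (Fin n) (Fin n) (MvPolynomial (Fin d) ℝ)) (hF : F.IsSymm) :
    (∃ t ∈ T, ∃ W ∈ setSMul T N, t • F = 1 + W)
    ↔ ∃ s ∈ SOSpoly d, ∃ W ∈ setSMul T N, (1 + s) • F = 1 + W := by
  have sosT : ∀ {p : MvPolynomial (Fin d) ℝ}, IsSumSq p → p ∈ T := fun h ↦
    hT.1 (mem_SOSpoly_iff.2 h)
  have hone : (1 : MvPolynomial (Fin d) ℝ) ∈ T := sosT IsSumSq.one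
  constructor
  · rintro ⟨t, ht, W, hW, hWF⟩
    obtain ⟨c, hc, hcF⟩ := exists_scalar_add_mem_SOSmat F hF
    have hadd := fun {a b} (ha : a ∈ T) (hb : b ∈ T) ↦ hT.2.1 a ha b hb
    have hmul := fun {a b} (ha : a ∈ T) (hb : b ∈ T) ↦ hT.2.2 a ha b hb
    have hcT : c ∈ T := sosT hc
    -- The bound `c` is enlarged to `e = 2c + 1`, which makes `k = (1 + e) / 2` equal to `c + 1`.
    obtain ⟨k, hk⟩ : ∃ k, k = c + 1 := ⟨_, rfl⟩
    obtain ⟨e, he⟩ : ∃ e, e = c + c + 1 := ⟨_, rfl⟩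
    have hkT : k ∈ T := hk ▸ hadd hcT hone
    have heS : IsSumSq e := he ▸ (hc.add hc).add IsSumSq.one
    have heT : e ∈ T := sosT heS
    -- The linear term of `σ` in `t` cancels that of `t * (1 + e)`.
    obtain ⟨σ, hσ⟩ : ∃ σ, σ = (1 - k * t) * (1 - k * t) := ⟨_, rfl⟩
    have hσT : σ ∈ T := hσ ▸ sosT (IsSumSq.mul_self _)
    -- The slack `ρ ∈ T` turns the quadratic and cubic terms in `t` into a sum of squares.
    obtain ⟨ρ, hρ⟩ : ∃ ρ, ρ = t * ((k * e + k * e) + k * k * e * (1 + t + t * t)) := ⟨_, rfl⟩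
    have hρT : ρ ∈ T := hρ ▸ hmul ht (hadd (hadd (hmul hkT heT) (hmul hkT heT))
      (hmul (hmul (hmul hkT hkT) heT) (hadd (hadd hone ht) (hmul ht ht))))
    obtain ⟨τ, hτ⟩ : ∃ τ, τ = 1 + σ * e + ρ := ⟨_, rfl⟩
    have hτT : τ ∈ T := hτ ▸ hadd (hadd hone (hmul hσT heT)) hρT
    obtain ⟨s, hs⟩ : ∃ s, s = (t * k) * (t * k) * (1 + e * ((1 + t) * (1 + t))) := ⟨_, rfl⟩
    have hsS : IsSumSq s := hs ▸ (IsSumSq.mul_self _).mul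
      (IsSumSq.one.add (heS.mul (IsSumSq.mul_self _)))
    have hid : 1 + s = τ * t + σ := by
      rw [hs, hτ, hρ, hσ, he, hk]
      ring
    have h1N : (1 : Matrix (Fin n) (Fin n) (MvPolynomial (Fin d) ℝ)) ∈ N := by
      simpa using hN.2.2 (transpose_mul_mem_SOSmat 1)
    have hsN : e • 1 + F ∈ N := by
      have h := hN.1 _ (hN.2.2 hcF) _ (hN.2.1 k (mem_SOSpoly_iff.2 (hk ▸ hc.add IsSumSq.one)) _ h1N)
      convert h using 1
      rw [he, hk]
      module
    refine ⟨s, mem_SOSpoly_iff.2 hsS, τ • W + σ • (e • 1 + F) + ρ • 1, ?_, ?_⟩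
    · exact add_mem_setSMul (add_mem_setSMul (smul_mem_setSMul hT hτT hW)
        (mem_setSMul_of_mem hσT hsN)) (mem_setSMul_of_mem hρT h1N)
    · have hW' : W = t • F - 1 := by
        rw [hWF]
        abel
      rw [hid, hW', hτ]
      module
  · rintro ⟨s, hs, W, hW, h⟩
    exact ⟨1 + s, hT.2.1 1 hone s (hT.1 hs), W, hW, h⟩
end
end

section
/- Let F, G ∈ Symₙ(ℝ[x]) and set G̃ := G ⊕ (−1) and F̃ := F ⊕ 0, the block-diagonal (n+1)×(n+1) matrix polynomials obtained by adjoining the constant scalar −1, respectively 0, in the last diagonal entry. Then for every preordering T in ℝ[x] the following are equivalent: (1) there exists s ∈ Σℝ[x]² such that (1+s)F ∈ Iₙ + T·N_G; (2) there exists s ∈ Σℝ[x]² such that (1+s)F̃ ∈ I_{n+1} + T·O_{G̃}. -/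
/-!
Write `P` for the cone `T·ΣMat²`. Sorting the terms of a finite sum gives `T·N_G = P + T·G` and
`T·O_G = P + ℝ[x]·G` (`mem_setSMulI_NmodI`, `mem_setSMulI_OmodI`). Hence (1) says
`(1+s)F = I + S + gG` with `S ∈ P` and `g ∈ T`. The last diagonal entry of (2) reads
`0 = 1 + σ - p`, where `σ ∈ T` is the corner of an element of `P` and `p` is the coefficient of `G̃`.
So `p = 1 + σ` automatically lies in `T`, and the upper left block of (2) is an instance of (1).

Conversely, the coefficient `g` in (1) has to be replaced by one in `1 + T`. Every symmetric `G`
satisfies `u I - G ∈ ΣMat²` for some sum of squares `u` (`exists_smul_one_sub_mem`). Multiplying (1)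
by `1 + u` yields
`(1+s)(1+u)F = I + [(uI - G) + (1+u)S] + (1 + (1+u)g)G`,
and with `σ = (1+u)g` the matrix `0 ⊕ σ ∈ P` cancels the corner of `(1+σ)G̃` down to `-1`.
-/

open Matrix MvPolynomial

noncomputable section

/-- Finite sums of hermitian squares `Hᵀ * H` of matrix polynomials indexed by `k`. -/
def SOSmatI (d : ℕ) (k : Type) [Fintype k] :
    Set (Matrix k k (MvPolynomial (Fin d) ℝ)) :=
  {M | M ∈ AddSubmonoid.closure
      {A : Matrix k k (MvPolynomial (Fin d) ℝ) | ∃ H, A = Hᵀ * H}}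

/-- The weak quadratic module `N_G = ΣMat(ℝ[x])² + (Σℝ[x]²)·G`. -/
def NmodI {d : ℕ} {k : Type} [Fintype k] (G : Matrix k k (MvPolynomial (Fin d) ℝ)) :
    Set (Matrix k k (MvPolynomial (Fin d) ℝ)) :=
  {M | ∃ S ∈ SOSmatI d k, ∃ s ∈ SOSpoly d, M = S + s • G}

/-- The weak quadratic module `O_G = ΣMat(ℝ[x])² + ℝ[x]·G`. -/
def OmodI {d : ℕ} {k : Type} [Fintype k] (G : Matrix k k (MvPolynomial (Fin d) ℝ)) :
    Set (Matrix k k (MvPolynomial (Fin d) ℝ)) :=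
  {M | ∃ S ∈ SOSmatI d k, ∃ p : MvPolynomial (Fin d) ℝ, M = S + p • G}

/-- The set of finite sums `∑ aᵢ • Bᵢ` with `aᵢ ∈ A`, `Bᵢ ∈ B`. -/
def setSMulI {d : ℕ} {k : Type} [Fintype k] (A : Set (MvPolynomial (Fin d) ℝ))
    (B : Set (Matrix k k (MvPolynomial (Fin d) ℝ))) :
    Set (Matrix k k (MvPolynomial (Fin d) ℝ)) :=
  {M | M ∈ AddSubmonoid.closure
      {P : Matrix k k (MvPolynomial (Fin d) ℝ) | ∃ a ∈ A, ∃ b ∈ B, P = a • b}}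

/-! ### Closure properties of the cones -/

section Cones

variable {d : ℕ} {k l : Type} [Fintype k] [Fintype l]

lemma sq_mem_SOSpoly (r : MvPolynomial (Fin d) ℝ) : r ^ 2 ∈ SOSpoly d :=
  AddSubmonoid.subset_closure ⟨r, rfl⟩

lemma zero_mem_SOSpoly : (0 : MvPolynomial (Fin d) ℝ) ∈ SOSpoly d :=
  (AddSubmonoid.closure _).zero_mem

lemma one_mem_SOSpoly : (1 : MvPolynomial (Fin d) ℝ) ∈ SOSpoly d := by
  simpa using sq_mem_SOSpoly (1 : MvPolynomial (Fin d) ℝ)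

lemma add_mem_SOSpoly {a b : MvPolynomial (Fin d) ℝ} (ha : a ∈ SOSpoly d) (hb : b ∈ SOSpoly d) :
    a + b ∈ SOSpoly d :=
  (AddSubmonoid.closure _).add_mem ha hb

lemma mul_mem_SOSpoly {a b : MvPolynomial (Fin d) ℝ} (ha : a ∈ SOSpoly d) (hb : b ∈ SOSpoly d) :
    a * b ∈ SOSpoly d := by
  refine AddSubmonoid.closure_induction (motive := fun x _ => x * b ∈ SOSpoly d) ?_ ?_ ?_ ha
  · rintro _ ⟨r, rfl⟩
    refine AddSubmonoid.closure_induction (motive := fun y _ => r ^ 2 * y ∈ SOSpoly d) ?_ ?_ ?_ hb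
    · rintro _ ⟨q, rfl⟩
      rw [← mul_pow]
      exact sq_mem_SOSpoly _
    · simpa using zero_mem_SOSpoly
    · intro x y _ _ hx hy
      rw [mul_add]
      exact add_mem_SOSpoly hx hy
  · simpa using zero_mem_SOSpoly
  · intro x y _ _ hx hy
    rw [add_mul]
    exact add_mem_SOSpoly hx hy

lemma hsq_mem_SOSmatI (H : Matrix k k (MvPolynomial (Fin d) ℝ)) : Hᵀ * H ∈ SOSmatI d k :=
  AddSubmonoid.subset_closure ⟨H, rfl⟩

lemma zero_mem_SOSmatI : (0 : Matrix k k (MvPolynomial (Fin d) ℝ)) ∈ SOSmatI d k :=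
  (AddSubmonoid.closure _).zero_mem

lemma add_mem_SOSmatI {A B : Matrix k k (MvPolynomial (Fin d) ℝ)} (hA : A ∈ SOSmatI d k)
    (hB : B ∈ SOSmatI d k) : A + B ∈ SOSmatI d k :=
  (AddSubmonoid.closure _).add_mem hA hB

lemma zero_mem_setSMulI {A : Set (MvPolynomial (Fin d) ℝ)}
    {B : Set (Matrix k k (MvPolynomial (Fin d) ℝ))} : 0 ∈ setSMulI A B :=
  (AddSubmonoid.closure _).zero_mem

lemma add_mem_setSMulI {A : Set (MvPolynomial (Fin d) ℝ)}
    {B : Set (Matrix k k (MvPolynomial (Fin d) ℝ))} {M N : Matrix k k (MvPolynomial (Fin d) ℝ)}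
    (hM : M ∈ setSMulI A B) (hN : N ∈ setSMulI A B) : M + N ∈ setSMulI A B :=
  (AddSubmonoid.closure _).add_mem hM hN

lemma smul_mem_setSMulI {A : Set (MvPolynomial (Fin d) ℝ)}
    {B : Set (Matrix k k (MvPolynomial (Fin d) ℝ))} {a : MvPolynomial (Fin d) ℝ}
    {M : Matrix k k (MvPolynomial (Fin d) ℝ)}
    (ha : a ∈ A) (hM : M ∈ B) : a • M ∈ setSMulI A B :=
  AddSubmonoid.subset_closure ⟨a, ha, M, hM, rfl⟩

/-- A linear map carrying `B` into `B'` carries `A·B` into `A·B'`. -/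
lemma map_mem_setSMulI {A : Set (MvPolynomial (Fin d) ℝ)}
    {B : Set (Matrix k k (MvPolynomial (Fin d) ℝ))}
    {B' : Set (Matrix l l (MvPolynomial (Fin d) ℝ))}
    (φ : Matrix k k (MvPolynomial (Fin d) ℝ) →ₗ[MvPolynomial (Fin d) ℝ]
      Matrix l l (MvPolynomial (Fin d) ℝ))
    (hφ : ∀ M ∈ B, φ M ∈ B') {M : Matrix k k (MvPolynomial (Fin d) ℝ)}
    (hM : M ∈ setSMulI A B) : φ M ∈ setSMulI A B' := by
  refine AddSubmonoid.closure_induction (motive := fun x _ => φ x ∈ setSMulI A B') ?_ ?_ ?_ hM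
  · rintro _ ⟨a, ha, b, hb, rfl⟩
    rw [map_smul]
    exact smul_mem_setSMulI ha (hφ b hb)
  · rw [map_zero]
    exact zero_mem_setSMulI
  · intro x y _ _ hx hy
    rw [map_add]
    exact add_mem_setSMulI hx hy

lemma smul_setSMulI {T : Set (MvPolynomial (Fin d) ℝ)} (hT : IsPreordering T)
    {B : Set (Matrix k k (MvPolynomial (Fin d) ℝ))} {a : MvPolynomial (Fin d) ℝ} (ha : a ∈ T)
    {M : Matrix k k (MvPolynomial (Fin d) ℝ)} (hM : M ∈ setSMulI T B) :
    a • M ∈ setSMulI T B := by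
  refine AddSubmonoid.closure_induction (motive := fun x _ => a • x ∈ setSMulI T B) ?_ ?_ ?_ hM
  · rintro _ ⟨t, ht, b, hb, rfl⟩
    rw [smul_smul]
    exact smul_mem_setSMulI (hT.2.2 a ha t ht) hb
  · rw [smul_zero]
    exact zero_mem_setSMulI
  · intro x y _ _ hx hy
    rw [smul_add]
    exact add_mem_setSMulI hx hy

/-! ### Normal forms of `T·N_G` and `T·O_G` -/

/-- `T·N_G = T·ΣMat² + T·G`. -/
lemma mem_setSMulI_NmodI {T : Set (MvPolynomial (Fin d) ℝ)} (hT : IsPreordering T)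
    (G W : Matrix k k (MvPolynomial (Fin d) ℝ)) :
    W ∈ setSMulI T (NmodI G) ↔ ∃ S ∈ setSMulI T (SOSmatI d k), ∃ g ∈ T, W = S + g • G := by
  constructor
  · intro hW
    refine AddSubmonoid.closure_induction
      (motive := fun x _ => ∃ S ∈ setSMulI T (SOSmatI d k), ∃ g ∈ T, x = S + g • G) ?_ ?_ ?_ hW
    · rintro _ ⟨t, ht, _, ⟨S, hS, s, hs, rfl⟩, rfl⟩
      exact ⟨t • S, smul_mem_setSMulI ht hS, t * s, hT.2.2 t ht s (hT.1 hs), by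
        rw [smul_add, smul_smul]⟩
    · exact ⟨0, zero_mem_setSMulI, 0, hT.1 zero_mem_SOSpoly, by simp⟩
    · rintro _ _ _ _ ⟨S, hS, g, hg, rfl⟩ ⟨S', hS', g', hg', rfl⟩
      exact ⟨S + S', add_mem_setSMulI hS hS', g + g', hT.2.1 g hg g' hg', by
        rw [add_smul]; abel⟩
  · rintro ⟨S, hS, g, hg, rfl⟩
    refine add_mem_setSMulI (map_mem_setSMulI LinearMap.id ?_ hS) (smul_mem_setSMulI hg ?_)
    · exact fun M hM => ⟨M, hM, 0, zero_mem_SOSpoly, by simp⟩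
    · exact ⟨0, zero_mem_SOSmatI, 1, one_mem_SOSpoly, by simp⟩

/-- `T·O_G = T·ΣMat² + ℝ[x]·G`. -/
lemma mem_setSMulI_OmodI {T : Set (MvPolynomial (Fin d) ℝ)} (hT : IsPreordering T)
    (G W : Matrix k k (MvPolynomial (Fin d) ℝ)) :
    W ∈ setSMulI T (OmodI G) ↔
      ∃ S ∈ setSMulI T (SOSmatI d k), ∃ p : MvPolynomial (Fin d) ℝ, W = S + p • G := by
  constructor
  · intro hW
    refine AddSubmonoid.closure_induction
      (motive := fun x _ => ∃ S ∈ setSMulI T (SOSmatI d k), ∃ p : MvPolynomial (Fin d) ℝ,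
        x = S + p • G) ?_ ?_ ?_ hW
    · rintro _ ⟨t, ht, _, ⟨S, hS, p, rfl⟩, rfl⟩
      exact ⟨t • S, smul_mem_setSMulI ht hS, t * p, by rw [smul_add, smul_smul]⟩
    · exact ⟨0, zero_mem_setSMulI, 0, by simp⟩
    · rintro _ _ _ _ ⟨S, hS, p, rfl⟩ ⟨S', hS', p', rfl⟩
      exact ⟨S + S', add_mem_setSMulI hS hS', p + p', by rw [add_smul]; abel⟩
  · rintro ⟨S, hS, p, rfl⟩
    refine add_mem_setSMulI (map_mem_setSMulI LinearMap.id ?_ hS) ?_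
    · exact fun M hM => ⟨M, hM, 0, by simp⟩
    · rw [← one_smul (MvPolynomial (Fin d) ℝ) (p • G)]
      exact smul_mem_setSMulI (hT.1 one_mem_SOSpoly) ⟨0, zero_mem_SOSmatI, p, by simp⟩

/-! ### Scalar bounds for symmetric matrix polynomials -/

/-- The summand of `exists_smul_one_sub_mem` for one matrix position: with `v = a eᵢ - eⱼ` it equals
`a² (I - Eᵢᵢ) + (I - Eⱼⱼ) + v vᵀ`, where `I - Eᵢᵢ` is a symmetric idempotent. -/
lemma smul_one_sub_single_mem [DecidableEq k] (i j : k) (a : MvPolynomial (Fin d) ℝ) :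
    (a ^ 2 + 1) • (1 : Matrix k k (MvPolynomial (Fin d) ℝ))
      - (Matrix.single i j a + Matrix.single j i a) ∈ SOSmatI d k := by
  have h : (a ^ 2 + 1) • (1 : Matrix k k (MvPolynomial (Fin d) ℝ))
      - (Matrix.single i j a + Matrix.single j i a) =
      (a • (1 - Matrix.single i i 1 : Matrix k k (MvPolynomial (Fin d) ℝ)))ᵀ
          * (a • (1 - Matrix.single i i 1 : Matrix k k (MvPolynomial (Fin d) ℝ)))
        + (1 - Matrix.single j j 1 : Matrix k k (MvPolynomial (Fin d) ℝ))ᵀ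
          * (1 - Matrix.single j j 1 : Matrix k k (MvPolynomial (Fin d) ℝ))
        + (Matrix.single i i a - Matrix.single i j 1)ᵀ
          * (Matrix.single i i a - Matrix.single i j 1) := by
    simp only [Matrix.transpose_sub, Matrix.transpose_smul, Matrix.transpose_one,
      Matrix.transpose_single, Matrix.smul_mul, Matrix.mul_smul, smul_smul, sub_mul, mul_sub,
      one_mul, mul_one, Matrix.single_mul_single_same, sub_self, sub_zero, smul_sub,
      Matrix.smul_single, smul_eq_mul, add_smul, one_smul, pow_two]
    abel
  rw [h]
  exact add_mem_SOSmatI (add_mem_SOSmatI (hsq_mem_SOSmatI _) (hsq_mem_SOSmatI _))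
    (hsq_mem_SOSmatI _)

/-- Every symmetric matrix polynomial is dominated, modulo sums of hermitian squares, by a scalar
sum of squares. -/
lemma exists_smul_one_sub_mem [DecidableEq k] {G : Matrix k k (MvPolynomial (Fin d) ℝ)}
    (hG : G.IsSymm) : ∃ u ∈ SOSpoly d,
      u • (1 : Matrix k k (MvPolynomial (Fin d) ℝ)) - G ∈ SOSmatI d k := by
  -- `G` is the sum over all positions of `a (Eᵢⱼ + Eⱼᵢ)` with `a` half of the `(i, j)` entry.
  set a : k → k → MvPolynomial (Fin d) ℝ := fun i j => C (1 / 2) * G i j with ha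
  have hhalf : ∀ q : MvPolynomial (Fin d) ℝ, C (1 / 2) * q + C (1 / 2) * q = q := by
    intro q
    rw [← add_mul, ← map_add]
    norm_num
  have hGsum : G = ∑ i, ∑ j, (Matrix.single i j (a i j) + Matrix.single j i (a i j)) := by
    have h1 : ∑ i, ∑ j, Matrix.single j i (a i j) = ∑ i, ∑ j, Matrix.single i j (a i j) := by
      rw [Finset.sum_comm]
      simp only [ha, hG.apply]
    simp only [Finset.sum_add_distrib]
    rw [h1, ← Matrix.matrix_eq_sum_single a]
    ext1 i j
    exact (hhalf (G i j)).symm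
  refine ⟨∑ i, ∑ j, (a i j ^ 2 + 1), ?_, ?_⟩
  · exact AddSubmonoid.sum_mem (AddSubmonoid.closure _) fun i _ =>
      AddSubmonoid.sum_mem (AddSubmonoid.closure _) fun j _ =>
        add_mem_SOSpoly (sq_mem_SOSpoly _) one_mem_SOSpoly
  · have h : (∑ i, ∑ j, (a i j ^ 2 + 1)) • (1 : Matrix k k (MvPolynomial (Fin d) ℝ)) - G =
        ∑ i, ∑ j, ((a i j ^ 2 + 1) • (1 : Matrix k k (MvPolynomial (Fin d) ℝ))
          - (Matrix.single i j (a i j) + Matrix.single j i (a i j))) := by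
      conv_lhs => rw [hGsum]
      simp only [Finset.sum_smul, Finset.sum_sub_distrib]
    rw [h]
    exact AddSubmonoid.sum_mem (AddSubmonoid.closure _) fun i _ =>
      AddSubmonoid.sum_mem (AddSubmonoid.closure _) fun j _ => smul_one_sub_single_mem i j _

/-! ### Blocks of sums of hermitian squares -/

/-- A hermitian square of a single row is a hermitian square of a square matrix. -/
lemma row_hsq_mem_SOSmatI (v : Matrix (Fin 1) k (MvPolynomial (Fin d) ℝ)) :
    vᵀ * v ∈ SOSmatI d k := by
  classical
  rcases isEmpty_or_nonempty k with hk | ⟨⟨i₀⟩⟩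
  · rw [Subsingleton.elim (vᵀ * v) 0]
    exact zero_mem_SOSmatI
  · have h : vᵀ * v = (Matrix.of fun r c => if r = i₀ then v 0 c else 0)ᵀ
        * (Matrix.of fun r c => if r = i₀ then v 0 c else 0) := by
      ext1 i j
      simp [Matrix.mul_apply]
    rw [h]
    exact hsq_mem_SOSmatI _

lemma toBlocks₁₁_mem_SOSmatI
    {M : Matrix (k ⊕ Fin 1) (k ⊕ Fin 1) (MvPolynomial (Fin d) ℝ)}
    (hM : M ∈ SOSmatI d (k ⊕ Fin 1)) : M.toBlocks₁₁ ∈ SOSmatI d k := by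
  refine AddSubmonoid.closure_induction (motive := fun x _ => x.toBlocks₁₁ ∈ SOSmatI d k) ?_ ?_ ?_ hM
  · rintro _ ⟨H, rfl⟩
    have h : (Hᵀ * H).toBlocks₁₁
        = H.toBlocks₁₁ᵀ * H.toBlocks₁₁ + H.toBlocks₂₁ᵀ * H.toBlocks₂₁ := by
      ext1 i j
      simp [Matrix.toBlocks₁₁, Matrix.toBlocks₂₁, Matrix.mul_apply]
    rw [h]
    exact add_mem_SOSmatI (hsq_mem_SOSmatI _) (row_hsq_mem_SOSmatI _)
  · exact zero_mem_SOSmatI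
  · intro x y _ _ hx hy
    exact add_mem_SOSmatI hx hy

lemma diag_mem_SOSpoly {M : Matrix k k (MvPolynomial (Fin d) ℝ)} (hM : M ∈ SOSmatI d k) (i : k) :
    M i i ∈ SOSpoly d := by
  refine AddSubmonoid.closure_induction (motive := fun x _ => x i i ∈ SOSpoly d) ?_ ?_ ?_ hM
  · rintro _ ⟨H, rfl⟩
    rw [Matrix.mul_apply]
    refine AddSubmonoid.sum_mem (AddSubmonoid.closure _) fun j _ => ?_
    rw [Matrix.transpose_apply, ← pow_two]
    exact sq_mem_SOSpoly _
  · exact zero_mem_SOSpoly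
  · intro x y _ _ hx hy
    exact add_mem_SOSpoly hx hy

lemma diag_mem_of_mem_setSMulI {T : Set (MvPolynomial (Fin d) ℝ)} (hT : IsPreordering T)
    {M : Matrix k k (MvPolynomial (Fin d) ℝ)} (hM : M ∈ setSMulI T (SOSmatI d k)) (i : k) :
    M i i ∈ T := by
  refine AddSubmonoid.closure_induction (motive := fun x _ => x i i ∈ T) ?_ ?_ ?_ hM
  · rintro _ ⟨t, ht, b, hb, rfl⟩
    exact hT.2.2 t ht _ (hT.1 (diag_mem_SOSpoly hb i))
  · exact hT.1 zero_mem_SOSpoly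
  · intro x y _ _ hx hy
    exact hT.2.1 _ hx _ hy

/-- The upper left block of a block matrix, as a linear map. -/
def upperLeft (d : ℕ) (k : Type) :
    Matrix (k ⊕ Fin 1) (k ⊕ Fin 1) (MvPolynomial (Fin d) ℝ) →ₗ[MvPolynomial (Fin d) ℝ]
      Matrix k k (MvPolynomial (Fin d) ℝ) where
  toFun M := M.toBlocks₁₁
  map_add' _ _ := rfl
  map_smul' _ _ := rfl

/-- The extension `M ↦ M ⊕ 0`, as a linear map. -/
def extendZero (d : ℕ) (k : Type) :
    Matrix k k (MvPolynomial (Fin d) ℝ) →ₗ[MvPolynomial (Fin d) ℝ]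
      Matrix (k ⊕ Fin 1) (k ⊕ Fin 1) (MvPolynomial (Fin d) ℝ) where
  toFun M := Matrix.fromBlocks M 0 0 0
  map_add' _ _ := by simp [Matrix.fromBlocks_add]
  map_smul' _ _ := by simp [Matrix.fromBlocks_smul]

lemma extendZero_mem_SOSmatI {M : Matrix k k (MvPolynomial (Fin d) ℝ)} (hM : M ∈ SOSmatI d k) :
    extendZero d k M ∈ SOSmatI d (k ⊕ Fin 1) := by
  refine AddSubmonoid.closure_induction
    (motive := fun x _ => extendZero d k x ∈ SOSmatI d (k ⊕ Fin 1)) ?_ ?_ ?_ hM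
  · rintro _ ⟨H, rfl⟩
    have h : extendZero d k (Hᵀ * H) = (extendZero d k H)ᵀ * extendZero d k H := by
      simp [extendZero, Matrix.fromBlocks_transpose, Matrix.fromBlocks_multiply]
    rw [h]
    exact hsq_mem_SOSmatI _
  · rw [map_zero]
    exact zero_mem_SOSmatI
  · intro x y _ _ hx hy
    rw [map_add]
    exact add_mem_SOSmatI hx hy

lemma corner_mem_SOSmatI [DecidableEq k] :
    (Matrix.fromBlocks 0 0 0 1 : Matrix (k ⊕ Fin 1) (k ⊕ Fin 1) (MvPolynomial (Fin d) ℝ))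
      ∈ SOSmatI d (k ⊕ Fin 1) := by
  have h : (Matrix.fromBlocks 0 0 0 1 : Matrix (k ⊕ Fin 1) (k ⊕ Fin 1) (MvPolynomial (Fin d) ℝ))
      = (Matrix.fromBlocks 0 0 0 1)ᵀ * Matrix.fromBlocks 0 0 0 1 := by
    simp [Matrix.fromBlocks_transpose, Matrix.fromBlocks_multiply]
  rw [h]
  exact hsq_mem_SOSmatI _

end Cones

/-! ### The equivalence -/

/-- Passing from `F, G` to the block diagonal extensions `F̃ = F ⊕ 0` and
`G̃ = G ⊕ (-1)` relates the quadratic module `N_G` with `O_{G̃}`. -/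
theorem blockdiag_Nmod_iff_Omod {d n : ℕ}
    (F G : Matrix (Fin n) (Fin n) (MvPolynomial (Fin d) ℝ))
    (hF : F.IsSymm) (hG : G.IsSymm)
    (T : Set (MvPolynomial (Fin d) ℝ)) (hT : IsPreordering T) :
    (∃ s ∈ SOSpoly d, ∃ W ∈ setSMulI T (NmodI G), (1 + s) • F = 1 + W)
    ↔ (∃ s ∈ SOSpoly d,
        ∃ W ∈ setSMulI T (OmodI
          (Matrix.fromBlocks G 0 0 (-1 : Matrix (Fin 1) (Fin 1) (MvPolynomial (Fin d) ℝ)))),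
        (1 + s) • Matrix.fromBlocks F 0 0 (0 : Matrix (Fin 1) (Fin 1) (MvPolynomial (Fin d) ℝ))
          = 1 + W) := by
  constructor
  · rintro ⟨s, hs, W, hW, hFW⟩
    obtain ⟨S, hS, g, hg, rfl⟩ := (mem_setSMulI_NmodI hT G W).1 hW
    obtain ⟨u, hu, huG⟩ := exists_smul_one_sub_mem hG
    have h1u : 1 + u ∈ T := hT.1 (add_mem_SOSpoly one_mem_SOSpoly hu)
    set σ := (1 + u) * g with hσ
    have hσT : σ ∈ T := hT.2.2 _ h1u _ hg
    set S' := u • (1 : Matrix (Fin n) (Fin n) (MvPolynomial (Fin d) ℝ)) - G + (1 + u) • S with hS'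
    have hS'mem : S' ∈ setSMulI T (SOSmatI d (Fin n)) := by
      refine add_mem_setSMulI ?_ (smul_setSMulI hT h1u hS)
      simpa using smul_mem_setSMulI (hT.1 one_mem_SOSpoly) huG
    have hF' : (1 + (s + u + s * u)) • F = 1 + S' + (1 + σ) • G := by
      have h : (1 + (s + u + s * u)) • F = (1 + u) • ((1 + s) • F) := by
        rw [smul_smul]
        congr 1
        ring
      rw [h, hFW, hS', hσ]
      module
    refine ⟨s + u + s * u, add_mem_SOSpoly (add_mem_SOSpoly hs hu) (mul_mem_SOSpoly hs hu),
      _, (mem_setSMulI_OmodI hT _ _).2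
        ⟨extendZero d (Fin n) S' + σ • Matrix.fromBlocks 0 0 0 1,
          add_mem_setSMulI (map_mem_setSMulI _ (fun _ h => extendZero_mem_SOSmatI h) hS'mem)
            (smul_mem_setSMulI hσT corner_mem_SOSmatI), 1 + σ, rfl⟩, ?_⟩
    rw [Matrix.fromBlocks_smul, hF', ← Matrix.fromBlocks_one]
    simp only [extendZero, LinearMap.coe_mk, AddHom.coe_mk, Matrix.fromBlocks_smul,
      Matrix.fromBlocks_add, smul_zero, add_zero, zero_add]
    congr 1
    · abel
    · module
  · rintro ⟨s, hs, W, hW, hFW⟩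
    obtain ⟨S, hS, p, rfl⟩ := (mem_setSMulI_OmodI hT _ W).1 hW
    have hcorner : S (Sum.inr 0) (Sum.inr 0) ∈ T := diag_mem_of_mem_setSMulI hT hS _
    have hp : p = 1 + S (Sum.inr 0) (Sum.inr 0) := by
      have h := congrFun (congrFun hFW (Sum.inr 0)) (Sum.inr 0)
      simp at h
      -- The corner entry of the identity reads `0 = 1 + (S₂₂ - p)`.
      linear_combination h
    have hpT : p ∈ T := by
      rw [hp]
      exact hT.2.1 _ (hT.1 one_mem_SOSpoly) _ hcorner
    refine ⟨s, hs, upperLeft d (Fin n) S + p • G, (mem_setSMulI_NmodI hT G _).2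
      ⟨_, map_mem_setSMulI _ (fun _ h => toBlocks₁₁_mem_SOSmatI h) hS, p, hpT, rfl⟩, ?_⟩
    have h := congrArg (upperLeft d (Fin n)) hFW
    have h1 : upperLeft d (Fin n) 1 = 1 := by
      rw [← Matrix.fromBlocks_one]
      exact Matrix.toBlocks_fromBlocks₁₁ _ _ _ _
    rw [map_smul, map_add, map_add, map_smul, h1] at h
    exact h
end
end

section
/- Let F, G ∈ Symₙ(ℝ[x]) be such that for every a ∈ ℝ^d there exists r ∈ ℝ with F(a) − rG(a) ≻ 0. Then for every compact set K ⊆ ℝ^d there exists a polynomial p ∈ ℝ[x] such that F(a) − p(a)G(a) ≻ 0 for every a ∈ K. -/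
open Matrix MvPolynomial

/-!
The set `U = {(a, r) | F(a) - r G(a) ≻ 0}` is open in `ℝ^d × ℝ`, because positivity of a quadratic
form need only be tested on the compact unit sphere, and each slice
`U_a = {r | F(a) - r G(a) ≻ 0}` is convex, because the form is affine in `r`. All slices are
nonempty, so gluing locally constant choices with a partition of unity gives a continuous `f` with
`f a ∈ U_a` for every `a`. On a compact set `K` the graph of `f` has a uniform vertical neighbourhood
contained in `U`, and Stone–Weierstrass supplies a polynomial whose graph over `K` lies in it.
-/

/-- The set of pairs `(a, r)` for which the quadratic form of `F(a) - r G(a)` is positive definite.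
Positivity is required of the form only; symmetry is not part of the definition. -/
def positivityRegion {d n : ℕ} (F G : Matrix (Fin n) (Fin n) (MvPolynomial (Fin d) ℝ)) :
    Set ((Fin d → ℝ) × ℝ) :=
  {z | ∀ v : Fin n → ℝ, v ≠ 0 →
    0 < v ⬝ᵥ ((F.map (eval z.1)) - z.2 • (G.map (eval z.1))).mulVec v}

theorem convex_positivityRegion_slice {d n : ℕ}
    (F G : Matrix (Fin n) (Fin n) (MvPolynomial (Fin d) ℝ)) (a : Fin d → ℝ) :
    Convex ℝ {r : ℝ | (a, r) ∈ positivityRegion F G} := by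
  intro r hr s hs α β hα hβ hαβ v hv
  have h1 := hr v hv
  have h2 := hs v hv
  simp only [sub_mulVec, smul_mulVec, dotProduct_sub, dotProduct_smul, smul_eq_mul] at h1 h2 ⊢
  set x := v ⬝ᵥ (F.map (eval a)) *ᵥ v
  set y := v ⬝ᵥ (G.map (eval a)) *ᵥ v
  have key : x - (α * r + β * s) * y = α * (x - r * y) + β * (x - s * y) := by
    linear_combination (-x) * hαβ
  rw [key]
  rcases hα.eq_or_lt with h0 | h0
  · have : β = 1 := by linarith
    subst this
    simpa [← h0] using h2
  · exact add_pos_of_pos_of_nonneg (mul_pos h0 h1) (mul_nonneg hβ h2.le)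

theorem isOpen_positivityRegion {d n : ℕ}
    (F G : Matrix (Fin n) (Fin n) (MvPolynomial (Fin d) ℝ)) :
    IsOpen (positivityRegion F G) := by
  have hcont : Continuous fun w : ((Fin d → ℝ) × ℝ) × (Fin n → ℝ) =>
      w.2 ⬝ᵥ ((F.map (eval w.1.1)) - w.1.2 • (G.map (eval w.1.1))).mulVec w.2 := by
    have hev (p : MvPolynomial (Fin d) ℝ) :
        Continuous fun w : ((Fin d → ℝ) × ℝ) × (Fin n → ℝ) => eval w.1.1 p :=
      (MvPolynomial.continuous_eval p).comp (continuous_fst.comp continuous_fst)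
    simp only [dotProduct, mulVec, Matrix.sub_apply, Matrix.smul_apply, map_apply, smul_eq_mul]
    fun_prop
  rw [isOpen_iff_mem_nhds]
  intro z hz
  have hsphere := (isCompact_sphere (0 : Fin n → ℝ) 1).eventually_forall_of_forall_eventually
    (x₀ := z)
    (P := fun z v => 0 < v ⬝ᵥ ((F.map (eval z.1)) - z.2 • (G.map (eval z.1))).mulVec v)
    (fun v hv => hcont.continuousAt.eventually_const_lt
      (hz v (ne_zero_of_mem_unit_sphere ⟨v, hv⟩)))
  filter_upwards [hsphere] with y hy v hv
  have hnorm : 0 < ‖v‖ := norm_pos_iff.mpr hv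
  have hunit := hy (‖v‖⁻¹ • v) (by simp [norm_smul, hnorm.ne'])
  simp only [mulVec_smul, dotProduct_smul, smul_dotProduct, smul_eq_mul] at hunit
  have hinv := inv_pos.mpr hnorm
  exact pos_of_mul_pos_right (pos_of_mul_pos_right hunit hinv.le) hinv.le

/-- Multivariate Weierstrass approximation on a compact subset of `ℝ^d`. -/
theorem exists_mvPolynomial_near {d : ℕ} (f : C(Fin d → ℝ, ℝ)) {K : Set (Fin d → ℝ)}
    (hK : IsCompact K) {ε : ℝ} (hε : 0 < ε) :
    ∃ p : MvPolynomial (Fin d) ℝ, ∀ a ∈ K, |eval a p - f a| < ε := by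
  let φ : MvPolynomial (Fin d) ℝ →ₐ[ℝ] C(Fin d → ℝ, ℝ) :=
    aeval fun i => ⟨fun a => a i, continuous_apply i⟩
  have hφ (p : MvPolynomial (Fin d) ℝ) (a : Fin d → ℝ) : φ p a = eval a p := by
    induction p using MvPolynomial.induction_on with
    | C c => simp [φ]
    | add p q hp hq => simp [hp, hq]
    | mul_X p i hp => rw [map_mul, ContinuousMap.mul_apply, hp]; simp [φ]
  have hsep : φ.range.SeparatesPoints := by
    intro a b hab
    obtain ⟨i, hi⟩ := Function.ne_iff.mp hab
    exact ⟨φ (X i), ⟨φ (X i), ⟨X i, rfl⟩, rfl⟩, by simpa [hφ] using hi⟩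
  obtain ⟨_, ⟨p, rfl⟩, hp⟩ :=
    ContinuousMap.exists_mem_subalgebra_near_continuous_of_isCompact_of_separatesPoints
      hsep f hK hε
  refine ⟨p, fun a ha => ?_⟩
  have hpa := hp a ha
  rwa [Real.norm_eq_abs, show (φ.toRingHom p) a = eval a p from hφ p a] at hpa

/-- If for every point `a` there is a real `r` with `F(a) - r G(a) ≻ 0`, then on
every compact set there is a single polynomial `p` with `F(a) - p(a) G(a) ≻ 0`. -/
theorem polynomial_selection_on_compact {d n : ℕ}
    (F G : Matrix (Fin n) (Fin n) (MvPolynomial (Fin d) ℝ))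
    (hF : F.IsSymm) (hG : G.IsSymm)
    (h : ∀ a : Fin d → ℝ, ∃ r : ℝ, ∀ v : Fin n → ℝ, v ≠ 0 →
      0 < v ⬝ᵥ ((F.map (eval a)) - r • (G.map (eval a))).mulVec v) :
    ∀ K : Set (Fin d → ℝ), IsCompact K →
      ∃ p : MvPolynomial (Fin d) ℝ, ∀ a ∈ K, ∀ v : Fin n → ℝ, v ≠ 0 →
        0 < v ⬝ᵥ ((F.map (eval a)) - (eval a p) • (G.map (eval a))).mulVec v := by
  intro K hK
  have hU := isOpen_positivityRegion F G
  obtain ⟨f, hf⟩ := exists_continuous_forall_mem_convex_of_local_const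
    (convex_positivityRegion_slice F G) (fun a => by
      obtain ⟨r, hr⟩ := h a
      exact ⟨r, (Continuous.prodMk_left r).continuousAt.eventually_mem (hU.mem_nhds hr)⟩)
  -- A uniform vertical margin around the graph of `f` over `K`.
  have hmargin : ∀ᶠ e : ℝ in nhds 0, ∀ a ∈ K, (a, f a + e) ∈ positivityRegion F G := by
    refine hK.eventually_forall_of_forall_eventually fun a _ => ?_
    have hc : Continuous fun z : ℝ × (Fin d → ℝ) => (z.2, f z.2 + z.1) := by fun_prop
    exact hc.continuousAt.eventually_mem (hU.mem_nhds (by simpa using hf a))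
  obtain ⟨ε, hε, hball⟩ := Metric.eventually_nhds_iff.mp hmargin
  obtain ⟨p, hp⟩ := exists_mvPolynomial_near f hK hε
  refine ⟨p, fun a ha => ?_⟩
  have hpa := hball (y := eval a p - f a) (by simpa [Real.dist_eq] using hp a ha) a ha
  rw [add_sub_cancel] at hpa
  exact hpa
end

section
/- Let G₁,…,G_m, F be symmetric n×n real matrices. Then the following are equivalent: (1) for every nonzero positive semidefinite symmetric real matrix B with tr(G₁B) ≥ 0, …, tr(G_mB) ≥ 0, one has tr(FB) > 0; (2) there exist nonnegative real numbers r₁,…,r_m such that F − r₁G₁ − … − r_mG_m is positive definite. -/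
/-!
The theorem is a strict theorem of alternatives for the cone of positive semidefinite matrices.

If `F - ∑ rᵢ Gᵢ` is positive definite and `B = CᵀC` is a nonzero positive semidefinite matrix, then
`tr ((F - ∑ rᵢ Gᵢ) B)` is the sum of the values of the form `F - ∑ rᵢ Gᵢ` at the rows of `C`, hence
positive (`trace_mul_pos`).

Conversely, it suffices to test on the spectrahedron of positive semidefinite matrices of trace one,
which is convex and compact (`isCompact_spectrahedron`). Its image under
`B ↦ ((tr (Gᵢ B))ᵢ, -tr (F B))` is disjoint from the nonnegative orthant, so a functional `(r, c)`
separates the two strictly. It is nonnegative because it is bounded below on the orthant, but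
`c` may vanish. Since the separation is strict and `tr (F B)` is bounded on the spectrahedron,
`c` can be increased slightly to become positive (`exists_multipliers`); dividing by it gives the
multipliers.
-/

open Matrix

/-- The positive semidefinite symmetric matrices of trace one. -/
def spectrahedron (n : ℕ) : Set (Matrix (Fin n) (Fin n) ℝ) :=
  {B | B.IsSymm ∧ (∀ v : Fin n → ℝ, 0 ≤ v ⬝ᵥ B.mulVec v) ∧ B.trace = 1}

lemma convex_spectrahedron (n : ℕ) : Convex ℝ (spectrahedron n) := by
  rintro A ⟨hA1, hA2, hA3⟩ B ⟨hB1, hB2, hB3⟩ a b ha hb hab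
  refine ⟨(hA1.smul a).add (hB1.smul b), fun v => ?_, ?_⟩
  · rw [add_mulVec, smul_mulVec, smul_mulVec, dotProduct_add, dotProduct_smul, dotProduct_smul]
    have := hA2 v
    have := hB2 v
    simp only [smul_eq_mul]
    positivity
  · simp [hA3, hB3, hab]

/-- Testing the form on `eᵢ ± eⱼ` bounds `|Bᵢⱼ|` by `(Bᵢᵢ + Bⱼⱼ) / 2`, and the diagonal entries
lie in `[0, 1]`. -/
lemma spectrahedron_entry_mem {n : ℕ} {B : Matrix (Fin n) (Fin n) ℝ} (hB : B ∈ spectrahedron n)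
    (i j : Fin n) : B i j ∈ Set.Icc (-1 : ℝ) 1 := by
  obtain ⟨h1, h2, h3⟩ := hB
  have hd : ∀ k, 0 ≤ B k k := fun k => by simpa using h2 (Pi.single k 1)
  have hd1 : ∀ k, B k k ≤ 1 := fun k => by
    rw [← h3]
    exact Finset.single_le_sum (f := fun k => B k k) (fun k _ => hd k) (Finset.mem_univ k)
  have hs := h1.apply i j
  have hp := h2 (Pi.single i 1 + Pi.single j 1)
  have hm := h2 (Pi.single i 1 - Pi.single j 1)
  simp [mulVec_add, mulVec_sub] at hp hm
  constructor <;> linarith [hd1 i, hd1 j]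

lemma isCompact_spectrahedron (n : ℕ) : IsCompact (spectrahedron n) := by
  have hbox : IsCompact (Set.univ.pi fun _ => Set.univ.pi fun _ => Set.Icc (-1) 1 :
      Set (Fin n → Fin n → ℝ)) :=
    isCompact_univ_pi fun _ => isCompact_univ_pi fun _ => isCompact_Icc
  refine IsCompact.of_isClosed_subset (X := Matrix (Fin n) (Fin n) ℝ) hbox ?_
    fun B hB i _ j _ => spectrahedron_entry_mem hB i j
  have hset : spectrahedron n = {B | Bᵀ = B} ∩
      ((⋂ v : Fin n → ℝ, {B | 0 ≤ v ⬝ᵥ B.mulVec v}) ∩ {B | B.trace = 1}) := by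
    ext B
    simp [spectrahedron, Matrix.IsSymm]
  rw [hset]
  refine (isClosed_eq (by fun_prop) (by fun_prop)).inter
    ((isClosed_iInter fun v => isClosed_le (by fun_prop) (by fun_prop)).inter
      (isClosed_eq (by fun_prop) (by fun_prop)))

lemma trace_mul_pos {n : ℕ} {A B : Matrix (Fin n) (Fin n) ℝ}
    (hA : ∀ v : Fin n → ℝ, v ≠ 0 → 0 < v ⬝ᵥ A.mulVec v) (hB0 : B ≠ 0) (hB1 : B.IsSymm)
    (hB2 : ∀ v : Fin n → ℝ, 0 ≤ v ⬝ᵥ B.mulVec v) : 0 < (A * B).trace := by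
  have hB : B.PosSemidef := .of_dotProduct_mulVec_nonneg (by simpa [IsHermitian] using hB1.eq)
    (by simpa using hB2)
  obtain ⟨C, rfl⟩ : ∃ C : Matrix (Fin n) (Fin n) ℝ, B = Cᵀ * C := by
    open scoped MatrixOrder in
    obtain ⟨C, hC⟩ := CStarAlgebra.nonneg_iff_eq_star_mul_self.mp hB.nonneg
    exact ⟨C, by simpa [star_eq_conjTranspose] using hC⟩
  have htr : (A * (Cᵀ * C)).trace = ∑ i, C i ⬝ᵥ A.mulVec (C i) := by
    rw [← Matrix.mul_assoc, trace_mul_comm]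
    rfl
  rw [htr]
  obtain ⟨i, hi⟩ : ∃ i, C i ≠ 0 := by
    by_contra! h
    exact hB0 (by rw [show C = 0 from funext h]; simp)
  refine Finset.sum_pos' (fun k _ => ?_) ⟨i, Finset.mem_univ i, hA _ hi⟩
  by_cases hk : C k = 0
  · simp [hk]
  · exact (hA _ hk).le

/-- A strict theorem of alternatives over a compact convex set: if the nonnegativity of the
functionals `g i` forces positivity of `φ`, then `φ` dominates a nonnegative combination
of the `g i`. No constraint qualification is needed because positivity is strict. -/
lemma exists_multipliers {E : Type*} [AddCommGroup E] [Module ℝ E] [TopologicalSpace E]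
    {m : ℕ} {K : Set E} (hK : IsCompact K) (hKc : Convex ℝ K) (g : Fin m → E →L[ℝ] ℝ)
    (φ : E →L[ℝ] ℝ) (h : ∀ x ∈ K, (∀ i, 0 ≤ g i x) → 0 < φ x) :
    ∃ r : Fin m → ℝ, (∀ i, 0 ≤ r i) ∧ ∀ x ∈ K, 0 < φ x - ∑ i, r i * g i x := by
  let L : E →L[ℝ] (Fin m → ℝ) × ℝ := (ContinuousLinearMap.pi g).prod (-φ)
  have hQ : IsClosed (Set.Ici (0 : (Fin m → ℝ) × ℝ)) := isClosed_Ici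
  have hdisj : Disjoint (L '' K) (Set.Ici 0) := by
    rw [Set.disjoint_left]
    rintro _ ⟨x, hx, rfl⟩ hq
    have h1 : ∀ i, 0 ≤ g i x := fun i => hq.1 i
    have h2 : 0 ≤ -φ x := hq.2
    linarith [h x hx h1]
  obtain ⟨f, u, v, hu, huv, hv⟩ := geometric_hahn_banach_compact_closed
    (hKc.linear_image L.toLinearMap) (hK.image L.continuous) (convex_Ici 0) hQ hdisj
  have hv0 : v < 0 := by simpa using hv 0 (Set.mem_Ici.mpr le_rfl)
  -- A functional bounded below on a cone is nonnegative there: scale a point by `v / f q`.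
  have hnn : ∀ q : (Fin m → ℝ) × ℝ, 0 ≤ q → 0 ≤ f q := by
    intro q hq
    by_contra! hlt
    have := hv ((v / f q) • q)
      (Set.mem_Ici.mpr (smul_nonneg (div_nonneg_of_nonpos hv0.le hlt.le) hq))
    rw [map_smul, smul_eq_mul, div_mul_cancel₀ _ hlt.ne] at this
    exact lt_irrefl _ this
  set r : Fin m → ℝ := fun i => f (Pi.single i 1, 0) with hr
  set c : ℝ := f (0, 1) with hc
  have hr0 : ∀ i, 0 ≤ r i := fun i => hnn _ ⟨by simp, le_rfl⟩
  have hc0 : 0 ≤ c := hnn _ ⟨le_rfl, zero_le_one⟩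
  have hf : ∀ x, f (L x) = ∑ i, r i * g i x - c * φ x := by
    intro x
    have hx : L x = ∑ i, g i x • ((Pi.single i 1, 0) : (Fin m → ℝ) × ℝ) + (-φ x) • (0, 1) := by
      ext i
      · simp [L, Prod.fst_sum, Finset.sum_apply, Pi.single_apply]
      · simp [L, Prod.snd_sum]
    rw [hx, map_add, map_sum]
    simp only [map_smul, smul_eq_mul, ← hc]
    rw [neg_mul, ← sub_eq_add_neg, mul_comm (φ x)]
    congr 1
    exact Finset.sum_congr rfl fun i _ => mul_comm _ _
  obtain ⟨M, hM⟩ := hK.exists_bound_of_continuousOn φ.continuous.continuousOn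
  -- The strict gap `u < 0` absorbs the perturbation `ε * φ x`, which also covers `c = 0`.
  set ε : ℝ := -u / (|M| + 1) with hε
  have hε0 : 0 < ε := div_pos (by linarith) (by positivity)
  have hεM : ε * (|M| + 1) = -u := div_mul_cancel₀ _ (by positivity)
  have hcε : 0 < c + ε := by linarith
  refine ⟨fun i => r i / (c + ε), fun i => div_nonneg (hr0 i) hcε.le, fun x hx => ?_⟩
  have h1 := hu _ (Set.mem_image_of_mem L hx)
  rw [hf] at h1
  have h2 : -|M| ≤ φ x := (abs_le.mp ((hM x hx).trans (le_abs_self M))).1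
  have h3 : ε * -|M| ≤ ε * φ x := mul_le_mul_of_nonneg_left h2 hε0.le
  have h4 : φ x - ∑ i, r i / (c + ε) * g i x
      = ((c + ε) * φ x - ∑ i, r i * g i x) / (c + ε) := by
    simp only [div_mul_eq_mul_div, ← Finset.sum_div]
    field_simp
  rw [h4]
  exact div_pos (by linarith) hcε

/-- Equivalence between the trace positivity condition and the existence of
nonnegative multipliers making `F - ∑ rᵢ Gᵢ` positive definite. -/
theorem trace_finsler_several_constraints {n m : ℕ}
    (G : Fin m → Matrix (Fin n) (Fin n) ℝ) (F : Matrix (Fin n) (Fin n) ℝ)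
    (hG : ∀ i, (G i).IsSymm) (hF : F.IsSymm) :
    (∀ B : Matrix (Fin n) (Fin n) ℝ, B ≠ 0 → B.IsSymm →
        (∀ v : Fin n → ℝ, 0 ≤ v ⬝ᵥ B.mulVec v) →
        (∀ i, 0 ≤ (G i * B).trace) → 0 < (F * B).trace)
    ↔ ∃ r : Fin m → ℝ, (∀ i, 0 ≤ r i) ∧
        ∀ v : Fin n → ℝ, v ≠ 0 →
          0 < v ⬝ᵥ ((F - ∑ i, r i • G i).mulVec v) := by
  have hlin : ∀ (r : Fin m → ℝ) (B : Matrix (Fin n) (Fin n) ℝ),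
      ((F - ∑ i, r i • G i) * B).trace = (F * B).trace - ∑ i, r i * (G i * B).trace := by
    intro r B
    simp [Matrix.sub_mul, Matrix.sum_mul, trace_sub, trace_sum]
  constructor
  · intro h
    let T : Matrix (Fin n) (Fin n) ℝ → (Matrix (Fin n) (Fin n) ℝ →L[ℝ] ℝ) := fun A =>
      { toFun := fun B => (A * B).trace
        map_add' := fun B C => by simp [Matrix.mul_add]
        map_smul' := fun a B => by simp
        cont := by fun_prop }
    obtain ⟨r, hr, hpos⟩ := exists_multipliers (isCompact_spectrahedron n)
      (convex_spectrahedron n) (fun i => T (G i)) (T F) (fun B hB hg =>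
        h B (by rintro rfl; simpa using hB.2.2) hB.1 hB.2.1 hg)
    refine ⟨r, hr, fun v hv => ?_⟩
    have hvv : 0 < v ⬝ᵥ v := by
      simpa using dotProduct_star_self_pos_iff.mpr hv
    -- The value of a form at `v` is, up to the factor `v ⬝ᵥ v`, the trace against `v vᵀ / (v ⬝ᵥ v)`.
    have hmem : (v ⬝ᵥ v)⁻¹ • vecMulVec v v ∈ spectrahedron n := by
      refine ⟨IsSymm.smul (transpose_vecMulVec v v) _, fun w => ?_, ?_⟩
      · rw [smul_mulVec, dotProduct_smul, vecMulVec_mulVec, dotProduct_smul, smul_eq_mul]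
        rw [dotProduct_comm v w]
        exact mul_nonneg (inv_nonneg.mpr hvv.le) (mul_self_nonneg _)
      · rw [trace_smul, trace_vecMulVec, smul_eq_mul, inv_mul_cancel₀ hvv.ne']
    have key : 0 < ((F - ∑ i, r i • G i) * ((v ⬝ᵥ v)⁻¹ • vecMulVec v v)).trace := by
      rw [hlin]
      exact hpos _ hmem
    rw [Matrix.mul_smul, trace_smul, mul_vecMulVec, trace_vecMulVec, smul_eq_mul,
      dotProduct_comm (mulVec _ v) v] at key
    exact pos_of_mul_pos_right key (inv_nonneg.mpr hvv.le)
  · rintro ⟨r, hr, hpos⟩ B hB0 hB1 hB2 hg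
    have h1 := trace_mul_pos hpos hB0 hB1 hB2
    rw [hlin] at h1
    have h2 : 0 ≤ ∑ i, r i * (G i * B).trace :=
      Finset.sum_nonneg fun i _ => mul_nonneg (hr i) (hg i)
    linarith
end
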